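/- For all real numbers d and T with 1/4 ≤ d ≤ 5/8 and T ≥ 5/7, one has E(T,d)/π ≤ (640d − 112)/(1536(3T − 1)) + 1/2¹⁰. -/

import Mathlib

open Real

/-- The function `E(T,d)` of Bennett–Martin–O'Bryant–Rechnitzer. -/
noncomputable def Efun (T d : ℝ) : ℝ :=
  (2 * T / 3) / ((2 * d + 17) ^ 2 + 4 * T ^ 2)
    + (2 * T / 3) / ((-2 * d + 17) ^ 2 + 4 * T ^ 2)
    - (4 * T / 3) / (17 ^ 2 + 4 * T ^ 2)
    + (T / 2) * Real.log (1 + 17 ^ 2 / (4 * T ^ 2))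
    - (T / 4) * Real.log (1 + (2 * d + 17) ^ 2 / (4 * T ^ 2))
    - (T / 4) * Real.log (1 + (-2 * d + 17) ^ 2 / (4 * T ^ 2))
    + ((8 + 6 * π) / 45) / ((2 * d + 17) ^ 2 + 4 * T ^ 2) ^ ((3 : ℝ) / 2)
    + ((8 + 6 * π) / 45) / ((-2 * d + 17) ^ 2 + 4 * T ^ 2) ^ ((3 : ℝ) / 2)
    + (2 * (8 + 6 * π) / 45) / (17 ^ 2 + 4 * T ^ 2) ^ ((3 : ℝ) / 2)
    + ∑ k ∈ Finset.range 4,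
        (2 * Real.arctan ((1 + 4 * (k : ℝ)) / (2 * T))
          - Real.arctan ((2 * d + 1 + 4 * (k : ℝ)) / (2 * T))
          - Real.arctan ((-2 * d + 1 + 4 * (k : ℝ)) / (2 * T)))
    + ((2 * d + 15) / 4) * Real.arctan ((2 * d + 17) / (2 * T))
    + ((-2 * d + 15) / 4) * Real.arctan ((-2 * d + 17) / (2 * T))
    - (15 / 2) * Real.arctan (17 / (2 * T))

/-!
Write `x = 2d`. Up to a small remainder, the function `E` is the central second difference with
step `x`, at `17`, of a potential in which the logarithms are absorbed, minus the second differences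
of `u ↦ arctan (u / (2T))` at `1, 5, 9, 13`. The addition formula evaluates the latter as single
arctangents; the former is controlled by a bound on the second derivative. This gives an upper bound
for `E` which is convex in `x`, while the claimed bound is affine in `x`, so only `x = 1/2` and
`x = 5/4` have to be compared, and there the inequality is a polynomial one in `T`.
-/

open Set

section SecondDifference

/-- The central second difference of `f` at `c` with step `x`. -/
def secondDiff (f : ℝ → ℝ) (c x : ℝ) : ℝ :=
  f (c + x) + f (c - x) - 2 * f c

lemma secondDiff_nonpos_of_concaveOn {f : ℝ → ℝ} {c x : ℝ} (hx : 0 ≤ x)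
    (hf : ConcaveOn ℝ (Icc (c - x) (c + x)) f) : secondDiff f c x ≤ 0 := by
  have midpoint := hf.2 (right_mem_Icc.2 (by linarith)) (left_mem_Icc.2 (by linarith))
    (show (0 : ℝ) ≤ 1 / 2 by norm_num) (show (0 : ℝ) ≤ 1 / 2 by norm_num) (by norm_num)
  simp only [smul_eq_mul] at midpoint
  rw [show 1 / 2 * (c + x) + 1 / 2 * (c - x) = c by ring] at midpoint
  unfold secondDiff
  linarith

lemma secondDiff_le_of_deriv2_le {f f' f'' : ℝ → ℝ} {c x M : ℝ} (hx : 0 ≤ x)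
    (hf : ∀ u ∈ Icc (c - x) (c + x), HasDerivAt f (f' u) u)
    (hf' : ∀ u ∈ Icc (c - x) (c + x), HasDerivAt f' (f'' u) u)
    (hM : ∀ u ∈ Icc (c - x) (c + x), f'' u ≤ M) :
    secondDiff f c x ≤ M * x ^ 2 := by
  have hg : ∀ u ∈ Icc (c - x) (c + x),
      HasDerivAt (fun u ↦ f u - M / 2 * u ^ 2) (f' u - M * u) u := fun u hu ↦
    ((hf u hu).sub ((hasDerivAt_pow 2 u).const_mul (M / 2))).congr_deriv (by norm_num; ring)
  have hg' : ∀ u ∈ Icc (c - x) (c + x),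
      HasDerivAt (fun u ↦ f' u - M * u) (f'' u - M) u := fun u hu ↦
    ((hf' u hu).sub ((hasDerivAt_id u).const_mul M)).congr_deriv (by ring)
  have concave : ConcaveOn ℝ (Icc (c - x) (c + x)) (fun u ↦ f u - M / 2 * u ^ 2) :=
    concaveOn_of_hasDerivWithinAt2_nonpos (convex_Icc _ _)
      (fun u hu ↦ (hg u hu).continuousAt.continuousWithinAt)
      (fun u hu ↦ (hg u (interior_subset hu)).hasDerivWithinAt)
      (fun u hu ↦ (hg' u (interior_subset hu)).hasDerivWithinAt)
      (fun u hu ↦ sub_nonpos.2 (hM u (interior_subset hu)))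
  have hle := secondDiff_nonpos_of_concaveOn hx concave
  unfold secondDiff at hle ⊢
  linarith

end SecondDifference

section Convexity

lemma le_affine_of_convexOn_Icc {f : ℝ → ℝ} {a b m k x : ℝ} (hf : ConvexOn ℝ (Icc a b) f)
    (ha : f a ≤ m * a + k) (hb : f b ≤ m * b + k) (hx : x ∈ Icc a b) : f x ≤ m * x + k := by
  have hab : a ≤ b := hx.1.trans hx.2
  have affine : ConcaveOn ℝ (Icc a b) (fun x ↦ m * x + k) :=
    ((LinearMap.mul ℝ ℝ m).concaveOn (convex_Icc a b)).add_const k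
  have hmax := (hf.sub affine).le_max_of_mem_Icc (left_mem_Icc.2 hab) (right_mem_Icc.2 hab) hx
  exact sub_nonpos.1 (hmax.trans (max_le (sub_nonpos.2 ha) (sub_nonpos.2 hb)))

lemma convexOn_sq_div_add_mul_sq {α β r : ℝ} (hα : 0 < α) (hβ : 0 ≤ β) (h : 3 * β * r ^ 2 ≤ α) :
    ConvexOn ℝ (Icc (-r) r) (fun x ↦ x ^ 2 / (α + β * x ^ 2)) := by
  refine ⟨convex_Icc _ _, fun x hx y hy s t hs ht hst ↦ ?_⟩
  have mul_le_sq : ∀ {u v : ℝ}, u ∈ Icc (-r) r → v ∈ Icc (-r) r → u * v ≤ r ^ 2 :=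
    fun {u v} hu hv ↦ (le_abs_self _).trans <| by
      rw [abs_mul, sq]
      exact mul_le_mul (abs_le.2 hu) (abs_le.2 hv) (abs_nonneg _)
        ((abs_nonneg _).trans (abs_le.2 hu))
  have hm : s * x + t * y ∈ Icc (-r) r := convex_Icc _ _ hx hy hs ht hst
  have hαβ : 0 ≤ α - β * (x * y + (s * x + t * y) * x + (s * x + t * y) * y) := by
    nlinarith [mul_le_sq hx hy, mul_le_sq hm hx, mul_le_sq hm hy]
  simp only [smul_eq_mul]
  obtain rfl : t = 1 - s := by linarith
  rw [← sub_nonneg]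
  have gap : s * (x ^ 2 / (α + β * x ^ 2)) + (1 - s) * (y ^ 2 / (α + β * y ^ 2))
      - (s * x + (1 - s) * y) ^ 2 / (α + β * (s * x + (1 - s) * y) ^ 2)
      = s * (1 - s) * (x - y) ^ 2 * α
          * (α - β * (x * y + (s * x + (1 - s) * y) * x + (s * x + (1 - s) * y) * y))
        / ((α + β * x ^ 2) * (α + β * y ^ 2) * (α + β * (s * x + (1 - s) * y) ^ 2)) := by
    field_simp
    ring
  rw [gap]
  positivity

end Convexity

section Arctan

lemma arctan_le_self {r : ℝ} (hr : 0 ≤ r) : arctan r ≤ r := by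
  simpa only [tan_arctan] using le_tan (arctan_nonneg.2 hr) (arctan_lt_pi_div_two r)

lemma arctan_sub_arctan {a b : ℝ} (h : 0 < 1 + a * b) :
    arctan a - arctan b = arctan ((a - b) / (1 + a * b)) := by
  rw [sub_eq_add_neg, ← arctan_neg, arctan_add (by linarith)]
  congr 2
  ring

lemma neg_secondDiff_arctan {a h : ℝ} (hah : |a * h| < 1 + a ^ 2) :
    -secondDiff arctan a h
      = arctan (2 * a * h ^ 2 / ((1 + a ^ 2) ^ 2 + (1 - a ^ 2) * h ^ 2)) := by
  obtain ⟨hlow, hupp⟩ := abs_lt.1 hah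
  have hp : 0 < 1 + a * (a - h) := by linarith
  have hq : 0 < 1 + a * (a + h) := by linarith
  have left : arctan a - arctan (a - h) = arctan (h / (1 + a * (a - h))) := by
    rw [arctan_sub_arctan (by linarith)]
    congr 2
    ring
  have right : arctan (a + h) - arctan a = arctan (h / (1 + a * (a + h))) := by
    rw [arctan_sub_arctan (by linarith)]
    congr 2 <;> ring
  have hpq : 0 < 1 + h / (1 + a * (a - h)) * (h / (1 + a * (a + h))) := by
    rw [div_mul_div_comm]
    have := mul_self_nonneg h
    positivity
  have hden : 0 < (1 + a ^ 2) ^ 2 + (1 - a ^ 2) * h ^ 2 := by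
    nlinarith [mul_pos hp hq, sq_nonneg h]
  calc -secondDiff arctan a h
      = arctan a - arctan (a - h) - (arctan (a + h) - arctan a) := by unfold secondDiff; ring
    _ = arctan ((h / (1 + a * (a - h)) - h / (1 + a * (a + h)))
          / (1 + h / (1 + a * (a - h)) * (h / (1 + a * (a + h))))) := by
        rw [left, right, arctan_sub_arctan hpq]
    _ = arctan (2 * a * h ^ 2 / ((1 + a ^ 2) ^ 2 + (1 - a ^ 2) * h ^ 2)) := by
        congr 1
        rw [div_eq_div_iff hpq.ne' hden.ne']
        field_simp
        ring

/-- The function `u ↦ arctan (u / (2T))` through which the arctangents enter `Efun T d`. -/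
noncomputable def scaledArctan (T u : ℝ) : ℝ :=
  arctan (u / (2 * T))

variable {T c x : ℝ}

lemma neg_secondDiff_scaledArctan_le (hT : 0 < T) (hc : 0 ≤ c) (h : |c * x| < 4 * T ^ 2 + c ^ 2) :
    -secondDiff (scaledArctan T) c x
      ≤ 4 * T * c * x ^ 2 / ((4 * T ^ 2 + c ^ 2) ^ 2 + (4 * T ^ 2 - c ^ 2) * x ^ 2) := by
  have hscale : |c / (2 * T) * (x / (2 * T))| < 1 + (c / (2 * T)) ^ 2 := by
    rw [show c / (2 * T) * (x / (2 * T)) = c * x / (4 * T ^ 2) by ring, abs_div,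
      abs_of_pos (show 0 < 4 * T ^ 2 by positivity), div_lt_iff₀ (by positivity)]
    refine h.trans_eq ?_
    field_simp
    ring
  have hden : 0 < (4 * T ^ 2 + c ^ 2) ^ 2 + (4 * T ^ 2 - c ^ 2) * x ^ 2 := by
    nlinarith [sq_lt_sq' (abs_lt.1 h).1 (abs_lt.1 h).2, sq_nonneg (T * x)]
  have hdiff : secondDiff (scaledArctan T) c x
      = secondDiff arctan (c / (2 * T)) (x / (2 * T)) := by
    simp only [secondDiff, scaledArctan, add_div, sub_div]
  have harg : 2 * (c / (2 * T)) * (x / (2 * T)) ^ 2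
        / ((1 + (c / (2 * T)) ^ 2) ^ 2 + (1 - (c / (2 * T)) ^ 2) * (x / (2 * T)) ^ 2)
      = 4 * T * c * x ^ 2 / ((4 * T ^ 2 + c ^ 2) ^ 2 + (4 * T ^ 2 - c ^ 2) * x ^ 2) := by
    rw [show (1 + (c / (2 * T)) ^ 2) ^ 2 + (1 - (c / (2 * T)) ^ 2) * (x / (2 * T)) ^ 2
        = ((4 * T ^ 2 + c ^ 2) ^ 2 + (4 * T ^ 2 - c ^ 2) * x ^ 2) / (2 * T) ^ 4 by
      field_simp; ring]
    field_simp
    ring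
  rw [hdiff, neg_secondDiff_arctan hscale, harg]
  exact arctan_le_self (by positivity)

lemma neg_secondDiff_scaledArctan_le_of_two_le (hT : 0 < T) (hc : 2 ≤ c) (hx : |x| ≤ 5 / 4) :
    -secondDiff (scaledArctan T) c x
      ≤ 4 * T * c / (4 * T ^ 2 + c ^ 2 - 1) ^ 2 * x ^ 2 := by
  have hcx : |c * x| < 4 * T ^ 2 + c ^ 2 := by
    rw [abs_mul, abs_of_pos (by linarith)]
    nlinarith [sq_nonneg T]
  have hx2 : x ^ 2 ≤ 25 / 16 := by
    nlinarith [sq_abs x, abs_nonneg x]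
  have hbase : 0 < 4 * T ^ 2 + c ^ 2 - 1 := by nlinarith [sq_nonneg T]
  have hden : (4 * T ^ 2 + c ^ 2 - 1) ^ 2
      ≤ (4 * T ^ 2 + c ^ 2) ^ 2 + (4 * T ^ 2 - c ^ 2) * x ^ 2 := by
    nlinarith [mul_le_mul_of_nonneg_left hx2 (sq_nonneg c), sq_nonneg (T * x), sq_nonneg T]
  calc -secondDiff (scaledArctan T) c x
      ≤ 4 * T * c * x ^ 2 / ((4 * T ^ 2 + c ^ 2) ^ 2 + (4 * T ^ 2 - c ^ 2) * x ^ 2) :=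
        neg_secondDiff_scaledArctan_le hT (by linarith) hcx
    _ ≤ 4 * T * c * x ^ 2 / (4 * T ^ 2 + c ^ 2 - 1) ^ 2 := by gcongr
    _ = 4 * T * c / (4 * T ^ 2 + c ^ 2 - 1) ^ 2 * x ^ 2 := by ring

end Arctan

section Potential

/-- The function of `u` whose central second difference at `17` with step `2 * d` collects the
logarithms, the arctangents with linear coefficients and the first three fractions of `Efun T d`. -/
noncomputable def potential (T u : ℝ) : ℝ :=
  (u - 2) / 4 * scaledArctan T u - T / 4 * log (1 + u ^ 2 / (4 * T ^ 2))
    + (2 * T / 3) / (u ^ 2 + 4 * T ^ 2)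

/-- The derivative of `potential T` at `u`, in closed form. -/
noncomputable def potentialDeriv (T u : ℝ) : ℝ :=
  scaledArctan T u / 4 - T / (u ^ 2 + 4 * T ^ 2) - (4 * T / 3) * u / (u ^ 2 + 4 * T ^ 2) ^ 2

/-- The second derivative of `potential T` at `u`, in closed form. -/
noncomputable def potentialDeriv2 (T u : ℝ) : ℝ :=
  T / 2 / (u ^ 2 + 4 * T ^ 2) + (2 * u - 4 / 3) * T / (u ^ 2 + 4 * T ^ 2) ^ 2
    + (16 / 3) * T * u ^ 2 / (u ^ 2 + 4 * T ^ 2) ^ 3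

variable {T u : ℝ}

lemma hasDerivAt_scaledArctan (hT : T ≠ 0) :
    HasDerivAt (scaledArctan T) (2 * T / (u ^ 2 + 4 * T ^ 2)) u := by
  refine ((hasDerivAt_id u).div_const (2 * T)).arctan.congr_deriv ?_
  simp only [id]
  field_simp
  ring

lemma hasDerivAt_sq_add (a : ℝ) : HasDerivAt (fun u ↦ u ^ 2 + a) (2 * u) u := by
  simpa using (hasDerivAt_pow 2 u).add_const a

lemma hasDerivAt_log_one_add_sq_div (hT : T ≠ 0) :
    HasDerivAt (fun u ↦ log (1 + u ^ 2 / (4 * T ^ 2))) (2 * u / (u ^ 2 + 4 * T ^ 2)) u := by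
  have hinner : HasDerivAt (fun u ↦ 1 + u ^ 2 / (4 * T ^ 2)) (2 * u / (4 * T ^ 2)) u := by
    simpa using ((hasDerivAt_pow 2 u).div_const (4 * T ^ 2)).const_add 1
  refine (hinner.log (by positivity)).congr_deriv ?_
  field_simp
  ring

lemma hasDerivAt_potential (hT : T ≠ 0) : HasDerivAt (potential T) (potentialDeriv T u) u := by
  have hlin : HasDerivAt (fun u : ℝ ↦ (u - 2) / 4) (1 / 4) u :=
    ((hasDerivAt_id u).sub_const 2).div_const 4
  have harctan := hlin.mul (hasDerivAt_scaledArctan hT)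
  have hlog := (hasDerivAt_log_one_add_sq_div (u := u) hT).const_mul (T / 4)
  have hfrac := (hasDerivAt_const u (2 * T / 3)).div (hasDerivAt_sq_add (4 * T ^ 2))
    (by positivity)
  refine ((harctan.sub hlog).add hfrac).congr_deriv ?_
  unfold potentialDeriv
  field_simp
  ring

lemma hasDerivAt_potentialDeriv (hT : T ≠ 0) :
    HasDerivAt (potentialDeriv T) (potentialDeriv2 T u) u := by
  have harctan := (hasDerivAt_scaledArctan (u := u) hT).div_const 4
  have hfrac := (hasDerivAt_const u T).div (hasDerivAt_sq_add (4 * T ^ 2)) (by positivity)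
  have hfrac_sq := ((hasDerivAt_id u).const_mul (4 * T / 3)).div
    ((hasDerivAt_sq_add (4 * T ^ 2)).fun_pow 2) (by positivity)
  refine ((harctan.sub hfrac).sub hfrac_sq).congr_deriv ?_
  unfold potentialDeriv2
  simp only [id]
  field_simp
  ring

lemma potentialDeriv2_le (hT : 0 < T) (hu : u ∈ Icc (63 / 4) (73 / 4)) :
    potentialDeriv2 T u
      ≤ T * (1 / 2 / (4 * T ^ 2 + 248) + 81 / 2 / (4 * T ^ 2 + 248) ^ 2) := by
  obtain ⟨hlow, hupp⟩ := hu
  have hQ : 4 * T ^ 2 + 248 ≤ u ^ 2 + 4 * T ^ 2 := by nlinarith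
  have cubic : (16 / 3) * T * u ^ 2 / (u ^ 2 + 4 * T ^ 2) ^ 3
      ≤ (16 / 3) * T / (u ^ 2 + 4 * T ^ 2) ^ 2 := by
    rw [div_le_div_iff₀ (by positivity) (by positivity)]
    have : 0 ≤ 16 / 3 * T * (u ^ 2 + 4 * T ^ 2) ^ 2 * (4 * T ^ 2) := by positivity
    linarith
  calc potentialDeriv2 T u
      ≤ T / 2 / (u ^ 2 + 4 * T ^ 2) + (2 * u - 4 / 3) * T / (u ^ 2 + 4 * T ^ 2) ^ 2
        + (16 / 3) * T / (u ^ 2 + 4 * T ^ 2) ^ 2 := by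
        unfold potentialDeriv2
        gcongr
    _ = T * (1 / 2 / (u ^ 2 + 4 * T ^ 2) + (2 * u + 4) / (u ^ 2 + 4 * T ^ 2) ^ 2) := by ring
    _ ≤ T * (1 / 2 / (4 * T ^ 2 + 248) + 81 / 2 / (4 * T ^ 2 + 248) ^ 2) := by
        gcongr
        linarith

lemma secondDiff_potential_le {x : ℝ} (hT : 0 < T) (hx : x ∈ Icc 0 (5 / 4)) :
    secondDiff (potential T) 17 x
      ≤ T * (1 / 2 / (4 * T ^ 2 + 248) + 81 / 2 / (4 * T ^ 2 + 248) ^ 2) * x ^ 2 :=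
  secondDiff_le_of_deriv2_le hx.1 (fun _ _ ↦ hasDerivAt_potential hT.ne')
    (fun _ _ ↦ hasDerivAt_potentialDeriv hT.ne')
    (fun _ hu ↦ potentialDeriv2_le hT ⟨by linarith [hu.1, hx.2], by linarith [hu.2, hx.2]⟩)

end Potential

section Remainder

/-- The part of `Efun T d` made of the powers with exponent `3 / 2`, at `x = 2 * d`. -/
noncomputable def remainder (T x : ℝ) : ℝ :=
  (8 + 6 * π) / 45 * (1 / ((17 + x) ^ 2 + 4 * T ^ 2) ^ ((3 : ℝ) / 2)
    + 1 / ((17 - x) ^ 2 + 4 * T ^ 2) ^ ((3 : ℝ) / 2)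
    + 2 / (17 ^ 2 + 4 * T ^ 2) ^ ((3 : ℝ) / 2))

lemma pow_three_le_rpow_three_halves {r a : ℝ} (hr : 0 ≤ r) (h : r ^ 2 ≤ a) :
    r ^ 3 ≤ a ^ ((3 : ℝ) / 2) := by
  rw [rpow_div_two_eq_sqrt _ ((sq_nonneg r).trans h)]
  exact_mod_cast pow_le_pow_left₀ hr (le_sqrt_of_sq_le h) 3

lemma remainder_le {T x : ℝ} (hx : |x| ≤ 5 / 4) : remainder T x ≤ 31 / 50000 := by
  obtain ⟨hlow, hupp⟩ := abs_le.1 hx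
  have hpow : ∀ u : ℝ, 63 / 4 ≤ u → (63 / 4 : ℝ) ^ 3 ≤ (u ^ 2 + 4 * T ^ 2) ^ ((3 : ℝ) / 2) :=
    fun u hu ↦ pow_three_le_rpow_three_halves (by norm_num) (by nlinarith [sq_nonneg T])
  calc remainder T x
      ≤ (8 + 6 * 3.1416) / 45 * (1 / (63 / 4) ^ 3 + 1 / (63 / 4) ^ 3 + 2 / (63 / 4) ^ 3) := by
        unfold remainder
        gcongr
        · exact pi_lt_d4.le
        · exact hpow _ (by linarith)
        · exact hpow _ (by linarith)
        · exact hpow _ (by norm_num)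
    _ ≤ 31 / 50000 := by norm_num

end Remainder

section Majorant

/-- An upper bound for `Efun T d`, at `x = 2 * d`. The first term comes from the arctangents with
`k = 0`, the second one from `1 ≤ k` and `potential`, the constant from `remainder`. -/
noncomputable def majorant (T x : ℝ) : ℝ :=
  4 * T * (x ^ 2 / ((4 * T ^ 2 + 1) ^ 2 + (4 * T ^ 2 - 1) * x ^ 2))
    + 11 * T / (80 * (T ^ 2 + 2)) * x ^ 2 + 31 / 50000

lemma Efun_eq_secondDiff (T d : ℝ) :
    Efun T d = secondDiff (potential T) 17 (2 * d)
      - ∑ k ∈ Finset.range 4, secondDiff (scaledArctan T) (1 + 4 * k) (2 * d)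
      + remainder T (2 * d) := by
  simp only [Efun, secondDiff, potential, scaledArctan, remainder, Finset.sum_range_succ,
    Finset.sum_range_zero]
  push_cast
  ring_nf

-- With `z = 4T²`, the first three fractions are `4c / (z + c² - 1)²` for `c = 5, 9, 13`.
lemma sum_tail_coeff_le {z : ℝ} (hz : 0 ≤ z) :
    20 / (z + 24) ^ 2 + 36 / (z + 80) ^ 2 + 52 / (z + 168) ^ 2
      + (1 / 2 / (z + 248) + 81 / 2 / (z + 248) ^ 2) ≤ 11 / 20 / (z + 8) := by
  rw [div_add_div _ _ (by positivity) (by positivity),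
    div_add_div _ _ (by positivity) (by positivity),
    div_add_div _ _ (by positivity) (by positivity),
    div_add_div _ _ (by positivity) (by positivity),
    div_le_div_iff₀ (by positivity) (by positivity), ← sub_nonneg]
  -- The difference is a polynomial in `z` with positive coefficients.
  ring_nf
  positivity

lemma secondDiff_potential_sub_scaledArctan_le {T x : ℝ} (hT : 0 < T) (hx : x ∈ Icc 0 (5 / 4)) :
    secondDiff (potential T) 17 x - secondDiff (scaledArctan T) 5 x
        - secondDiff (scaledArctan T) 9 x - secondDiff (scaledArctan T) 13 x
      ≤ 11 * T / (80 * (T ^ 2 + 2)) * x ^ 2 := by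
  have hx_abs : |x| ≤ 5 / 4 := (abs_of_nonneg hx.1).trans_le hx.2
  have hpot := secondDiff_potential_le hT hx
  have h5 := neg_secondDiff_scaledArctan_le_of_two_le hT (show (2 : ℝ) ≤ 5 by norm_num) hx_abs
  have h9 := neg_secondDiff_scaledArctan_le_of_two_le hT (show (2 : ℝ) ≤ 9 by norm_num) hx_abs
  have h13 := neg_secondDiff_scaledArctan_le_of_two_le hT (show (2 : ℝ) ≤ 13 by norm_num) hx_abs
  calc _ ≤ T * (1 / 2 / (4 * T ^ 2 + 248) + 81 / 2 / (4 * T ^ 2 + 248) ^ 2) * x ^ 2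
          + 4 * T * 5 / (4 * T ^ 2 + 5 ^ 2 - 1) ^ 2 * x ^ 2
          + 4 * T * 9 / (4 * T ^ 2 + 9 ^ 2 - 1) ^ 2 * x ^ 2
          + 4 * T * 13 / (4 * T ^ 2 + 13 ^ 2 - 1) ^ 2 * x ^ 2 := by linarith
    _ = (20 / (4 * T ^ 2 + 24) ^ 2 + 36 / (4 * T ^ 2 + 80) ^ 2 + 52 / (4 * T ^ 2 + 168) ^ 2
          + (1 / 2 / (4 * T ^ 2 + 248) + 81 / 2 / (4 * T ^ 2 + 248) ^ 2)) * (T * x ^ 2) := by ring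
    _ ≤ 11 / 20 / (4 * T ^ 2 + 8) * (T * x ^ 2) := by
        gcongr
        exact sum_tail_coeff_le (by positivity)
    _ = 11 * T / (80 * (T ^ 2 + 2)) * x ^ 2 := by
        field_simp
        ring

lemma neg_secondDiff_scaledArctan_one_le {T x : ℝ} (hT : 1 / 2 ≤ T) (hx : |x| ≤ 5 / 4) :
    -secondDiff (scaledArctan T) 1 x
      ≤ 4 * T * (x ^ 2 / ((4 * T ^ 2 + 1) ^ 2 + (4 * T ^ 2 - 1) * x ^ 2)) := by
  refine (neg_secondDiff_scaledArctan_le (by linarith) zero_le_one ?_).trans_eq (by ring)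
  rw [one_mul]
  nlinarith

lemma Efun_le_majorant {T d : ℝ} (hT : 1 / 2 ≤ T) (hd : d ∈ Icc 0 (5 / 8)) :
    Efun T d ≤ majorant T (2 * d) := by
  have hx : 2 * d ∈ Icc 0 (5 / 4) := ⟨by linarith [hd.1], by linarith [hd.2]⟩
  have hx_abs : |2 * d| ≤ 5 / 4 := (abs_of_nonneg hx.1).trans_le hx.2
  have main := neg_secondDiff_scaledArctan_one_le hT hx_abs
  have tail := secondDiff_potential_sub_scaledArctan_le (by linarith : 0 < T) hx
  have hrem := remainder_le (T := T) hx_abs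
  rw [Efun_eq_secondDiff, majorant]
  norm_num only [Finset.sum_range_succ, Finset.sum_range_zero]
  linarith

lemma convexOn_majorant {T : ℝ} (hT : 1 / 2 ≤ T) :
    ConvexOn ℝ (Icc (1 / 2) (5 / 4)) (majorant T) := by
  have hz : 1 ≤ 4 * T ^ 2 := by nlinarith
  have main : ConvexOn ℝ (Icc (-(5 / 4)) (5 / 4))
      (fun x ↦ x ^ 2 / ((4 * T ^ 2 + 1) ^ 2 + (4 * T ^ 2 - 1) * x ^ 2)) :=
    convexOn_sq_div_add_mul_sq (by positivity) (by linarith)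
      (by nlinarith [sq_nonneg (4 * T ^ 2 - 1)])
  have square : ConvexOn ℝ (Icc (-(5 / 4)) (5 / 4)) (fun x : ℝ ↦ x ^ 2) :=
    even_two.convexOn_pow.subset (subset_univ _) (convex_Icc _ _)
  exact (((main.smul (by positivity : 0 ≤ 4 * T)).add
    (square.smul (by positivity : 0 ≤ 11 * T / (80 * (T ^ 2 + 2))))).add_const _).subset
    (Icc_subset_Icc_left (by norm_num)) (convex_Icc _ _)

lemma majorant_half_le {T : ℝ} (hT : 5 / 7 ≤ T) :
    majorant T (1 / 2) ≤ 3.1415 * (48 / (1536 * (3 * T - 1)) + 1 / 2 ^ 10) := by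
  obtain ⟨s, hs, rfl⟩ : ∃ s, 0 ≤ s ∧ T = 5 / 7 + s := ⟨T - 5 / 7, by linarith, by ring⟩
  have hden : 0 < (4 * (5 / 7 + s) ^ 2 + 1) ^ 2 + (4 * (5 / 7 + s) ^ 2 - 1) * (1 / 2) ^ 2 := by
    nlinarith
  have hden' : 0 < 1536 * (3 * (5 / 7 + s) - 1) := by linarith
  rw [majorant, mul_div_assoc', div_mul_eq_mul_div, div_add_div _ _ hden.ne' (by positivity),
    div_add_div _ _ (by positivity) (by positivity), div_add_div _ _ hden'.ne' (by positivity),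
    mul_div_assoc', div_le_div_iff₀ (by positivity) (by positivity)]
  -- In powers of `s` the only negative coefficient of the difference is that of `s`.
  linarith [sq_nonneg (s - 21 / 100), pow_nonneg hs 3, pow_nonneg hs 4, pow_nonneg hs 5,
    pow_nonneg hs 6, pow_nonneg hs 7]

lemma majorant_five_quarters_le {T : ℝ} (hT : 5 / 7 ≤ T) :
    majorant T (5 / 4) ≤ 3.1415 * (288 / (1536 * (3 * T - 1)) + 1 / 2 ^ 10) := by
  obtain ⟨s, hs, rfl⟩ : ∃ s, 0 ≤ s ∧ T = 5 / 7 + s := ⟨T - 5 / 7, by linarith, by ring⟩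
  have hden : 0 < (4 * (5 / 7 + s) ^ 2 + 1) ^ 2 + (4 * (5 / 7 + s) ^ 2 - 1) * (5 / 4) ^ 2 := by
    nlinarith
  have hden' : 0 < 1536 * (3 * (5 / 7 + s) - 1) := by linarith
  rw [majorant, mul_div_assoc', div_mul_eq_mul_div, div_add_div _ _ hden.ne' (by positivity),
    div_add_div _ _ (by positivity) (by positivity), div_add_div _ _ hden'.ne' (by positivity),
    mul_div_assoc', div_le_div_iff₀ (by positivity) (by positivity)]
  -- In powers of `s` the only negative coefficient of the difference is that of `s ^ 6`.
  linarith [mul_nonneg (pow_nonneg hs 5) (sq_nonneg (s - 3 / 2)), pow_nonneg hs 2,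
    pow_nonneg hs 3, pow_nonneg hs 4, pow_nonneg hs 5, pow_nonneg hs 7]

lemma majorant_le {T x : ℝ} (hT : 5 / 7 ≤ T) (hx : x ∈ Icc (1 / 2) (5 / 4)) :
    majorant T x ≤ 3.1415 * ((320 * x - 112) / (1536 * (3 * T - 1)) + 1 / 2 ^ 10) := by
  refine (le_affine_of_convexOn_Icc (convexOn_majorant (by linarith))
    (m := 3.1415 * 320 / (1536 * (3 * T - 1)))
    (k := 3.1415 * (-112 / (1536 * (3 * T - 1)) + 1 / 2 ^ 10)) ?_ ?_ hx).trans_eq (by ring)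
  · exact (majorant_half_le hT).trans_eq (by ring)
  · exact (majorant_five_quarters_le hT).trans_eq (by ring)

end Majorant

theorem stmt_4 (d T : ℝ) (h1 : 1 / 4 ≤ d) (h2 : d ≤ 5 / 8) (hT : 5 / 7 ≤ T) :
    Efun T d / π ≤ (640 * d - 112) / (1536 * (3 * T - 1)) + 1 / 2 ^ 10 := by
  have hnum : 0 ≤ 640 * d - 112 := by linarith
  have hden : 0 ≤ 1536 * (3 * T - 1) := by linarith
  rw [div_le_iff₀' pi_pos]
  calc Efun T d
      ≤ majorant T (2 * d) := Efun_le_majorant (by linarith) ⟨by linarith, h2⟩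
    _ ≤ 3.1415 * ((320 * (2 * d) - 112) / (1536 * (3 * T - 1)) + 1 / 2 ^ 10) :=
        majorant_le hT ⟨by linarith, by linarith⟩
    _ = 3.1415 * ((640 * d - 112) / (1536 * (3 * T - 1)) + 1 / 2 ^ 10) := by ring
    _ ≤ π * ((640 * d - 112) / (1536 * (3 * T - 1)) + 1 / 2 ^ 10) := by
        gcongr
        exact pi_gt_d4.le
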